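/- arXiv:1706.10174 — 8 statements merged into one kernel-verified Lean document; each statement's English description precedes it below -/
import Mathlib

section
/- A pair (p, q) with p ∈ ℝ and q ∈ ℝ³ is realizable, i.e. there exists a finite nonnegative Borel measure μ on the unit sphere S² ⊂ ℝ³ with μ(S²) = p and ∫_{S²} Ω dμ(Ω) = q, if and only if p ≥ 0 and ‖q‖ ≤ p. -/
open MeasureTheory

theorem exists_dir_aux (q : EuclideanSpace ℝ (Fin 3)) :
    ∃ u : Metric.sphere (0 : EuclideanSpace ℝ (Fin 3)) 1,
      q = ‖q‖ • (u : EuclideanSpace ℝ (Fin 3)) := by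
  by_cases h : q = 0
  · refine ⟨⟨EuclideanSpace.single 0 1, by simp⟩, by simp [h]⟩
  · have h' : ‖q‖ ≠ 0 := norm_ne_zero_iff.mpr h
    refine ⟨⟨‖q‖⁻¹ • q, by simp [norm_smul, h']⟩, ?_⟩
    simp [smul_smul, h']

/-- A pair `(p, q)` is realizable (there is a finite nonnegative Borel measure on the unit
sphere `S² ⊂ ℝ³` with zeroth moment `p` and first moment `q`) iff `p ≥ 0` and `‖q‖ ≤ p`. -/
theorem realizable_iff (p : ℝ) (q : EuclideanSpace ℝ (Fin 3)) :
    (∃ μ : Measure (Metric.sphere (0 : EuclideanSpace ℝ (Fin 3)) 1),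
        IsFiniteMeasure μ ∧ (μ Set.univ).toReal = p ∧
        (∫ Ω, (Ω : EuclideanSpace ℝ (Fin 3)) ∂μ) = q) ↔
      0 ≤ p ∧ ‖q‖ ≤ p := by
  constructor
  · rintro ⟨μ, hμ, rfl, rfl⟩
    refine ⟨ENNReal.toReal_nonneg, ?_⟩
    have := norm_integral_le_of_norm_le_const (μ := μ) (C := 1)
      (f := fun Ω : Metric.sphere (0 : EuclideanSpace ℝ (Fin 3)) 1 =>
        (Ω : EuclideanSpace ℝ (Fin 3))) (Filter.Eventually.of_forall fun x => by simp)
    simpa [Measure.real] using this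
  · rintro ⟨hp, hq⟩
    obtain ⟨u, hu⟩ := exists_dir_aux q
    have ha : 0 ≤ (p + ‖q‖) / 2 := by positivity
    have hb : 0 ≤ (p - ‖q‖) / 2 := by linarith
    have hi : ∀ (c : ℝ) (v : Metric.sphere (0 : EuclideanSpace ℝ (Fin 3)) 1),
        Integrable (fun Ω : Metric.sphere (0 : EuclideanSpace ℝ (Fin 3)) 1 =>
          (Ω : EuclideanSpace ℝ (Fin 3))) (ENNReal.ofReal c • Measure.dirac v) := fun c v =>
      (integrable_dirac (by simp)).smul_measure ENNReal.ofReal_ne_top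
    have hf : ∀ (c : ℝ) (v : Metric.sphere (0 : EuclideanSpace ℝ (Fin 3)) 1),
        IsFiniteMeasure (ENNReal.ofReal c • Measure.dirac v) := fun c v =>
      Measure.smul_finite _ ENNReal.ofReal_ne_top
    have := hf ((p + ‖q‖) / 2) u
    have := hf ((p - ‖q‖) / 2) (-u)
    refine ⟨ENNReal.ofReal ((p + ‖q‖) / 2) • Measure.dirac u
      + ENNReal.ofReal ((p - ‖q‖) / 2) • Measure.dirac (-u), inferInstance, ?_, ?_⟩
    · simp only [Measure.add_apply, Measure.smul_apply, measure_univ, smul_eq_mul, mul_one]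
      rw [← ENNReal.ofReal_add ha hb, ENNReal.toReal_ofReal (by linarith)]
      ring
    · rw [integral_add_measure (hi _ _) (hi _ _), integral_smul_measure, integral_smul_measure,
        integral_dirac, integral_dirac, ENNReal.toReal_ofReal ha, ENNReal.toReal_ofReal hb]
      conv_rhs => rw [hu]
      rw [coe_neg_sphere]
      module
end

section
/- Let μ be a finite nonnegative Borel measure on the unit sphere S² ⊂ ℝ³ with moments ψ⁰ = μ(S²), ψ¹ = ∫_{S²} Ω dμ(Ω), ψ² = ∫_{S²} Ω Ωᵀ dμ(Ω), and let ν ∈ ℝ³ be a unit vector and s ∈ {+1, −1}. Then the measure with density Ω ↦ 1 + s (ν·Ω) with respect to μ is a nonnegative measure whose zeroth moment equals ψ⁰ + s (ν·ψ¹) and whose first moment equals ψ¹ + s (ψ² ν); consequently the pair (ψ⁰ + s ν·ψ¹, ψ¹ + s ψ² ν) is realizable, i.e. ψ⁰ + s ν·ψ¹ ≥ 0 and ‖ψ¹ + s ψ² ν‖ ≤ ψ⁰ + s ν·ψ¹. -/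
open MeasureTheory
open scoped InnerProductSpace

/-- Lemma 3.1: given a finite nonnegative measure `μ` on `S²` with moments
`ψ⁰ = μ(S²)`, `ψ¹ = ∫ Ω dμ`, `ψ²ν = ∫ ⟪Ω, ν⟫ Ω dμ` (the second-moment matrix applied
to `ν`), a unit vector `ν` and a sign `s = ±1`, the density `Ω ↦ 1 + s ⟪ν, Ω⟫` w.r.t. `μ`
is nonnegative, has zeroth moment `ψ⁰ + s ⟪ν, ψ¹⟫` and first moment `ψ¹ + s • (ψ² ν)`;
consequently `(ψ⁰ + s ⟪ν, ψ¹⟫, ψ¹ + s • ψ² ν)` is realizable. -/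
theorem moment_combination_realizable
    (μ : Measure (Metric.sphere (0 : EuclideanSpace ℝ (Fin 3)) 1)) [IsFiniteMeasure μ]
    (ν : EuclideanSpace ℝ (Fin 3)) (hν : ‖ν‖ = 1) (s : ℝ) (hs : s = 1 ∨ s = -1) :
    (∀ Ω : Metric.sphere (0 : EuclideanSpace ℝ (Fin 3)) 1,
        0 ≤ 1 + s * ⟪ν, (Ω : EuclideanSpace ℝ (Fin 3))⟫_ℝ) ∧
    ((μ.withDensity fun Ω =>
        ENNReal.ofReal (1 + s * ⟪ν, (Ω : EuclideanSpace ℝ (Fin 3))⟫_ℝ)) Set.univ).toReal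
      = (μ Set.univ).toReal + s * ⟪ν, ∫ Ω, (Ω : EuclideanSpace ℝ (Fin 3)) ∂μ⟫_ℝ ∧
    (∫ Ω, (Ω : EuclideanSpace ℝ (Fin 3))
        ∂(μ.withDensity fun Ω =>
          ENNReal.ofReal (1 + s * ⟪ν, (Ω : EuclideanSpace ℝ (Fin 3))⟫_ℝ)))
      = (∫ Ω, (Ω : EuclideanSpace ℝ (Fin 3)) ∂μ)
        + s • (∫ Ω, ⟪(Ω : EuclideanSpace ℝ (Fin 3)), ν⟫_ℝ • (Ω : EuclideanSpace ℝ (Fin 3)) ∂μ) ∧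
    0 ≤ (μ Set.univ).toReal + s * ⟪ν, ∫ Ω, (Ω : EuclideanSpace ℝ (Fin 3)) ∂μ⟫_ℝ ∧
    ‖(∫ Ω, (Ω : EuclideanSpace ℝ (Fin 3)) ∂μ)
        + s • (∫ Ω, ⟪(Ω : EuclideanSpace ℝ (Fin 3)), ν⟫_ℝ • (Ω : EuclideanSpace ℝ (Fin 3)) ∂μ)‖
      ≤ (μ Set.univ).toReal + s * ⟪ν, ∫ Ω, (Ω : EuclideanSpace ℝ (Fin 3)) ∂μ⟫_ℝ := by
  have hpos : ∀ Ω : Metric.sphere (0 : EuclideanSpace ℝ (Fin 3)) 1,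
        0 ≤ 1 + s * ⟪ν, (Ω : EuclideanSpace ℝ (Fin 3))⟫_ℝ := by
    intro Ω
    have h := abs_real_inner_le_norm ν (Ω : EuclideanSpace ℝ (Fin 3))
    have hΩ : ‖(Ω : EuclideanSpace ℝ (Fin 3))‖ = 1 := norm_eq_of_mem_sphere Ω
    rw [hν, hΩ, one_mul, abs_le] at h
    rcases hs with rfl | rfl <;> linarith [h.1, h.2]
  have hint : ∀ {E : Type} [NormedAddCommGroup E]
      (f : Metric.sphere (0 : EuclideanSpace ℝ (Fin 3)) 1 → E), Continuous f →
      Integrable f μ := fun f hf =>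
    hf.integrable_of_hasCompactSupport (HasCompactSupport.of_compactSpace f)
  have i1 : Integrable (fun Ω : Metric.sphere (0 : EuclideanSpace ℝ (Fin 3)) 1 =>
      (Ω : EuclideanSpace ℝ (Fin 3))) μ := hint _ continuous_subtype_val
  have i2 : Integrable (fun Ω : Metric.sphere (0 : EuclideanSpace ℝ (Fin 3)) 1 =>
      s * ⟪ν, (Ω : EuclideanSpace ℝ (Fin 3))⟫_ℝ) μ := hint _ (by fun_prop)
  have cd : Continuous (fun Ω : Metric.sphere (0 : EuclideanSpace ℝ (Fin 3)) 1 =>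
      1 + s * ⟪ν, (Ω : EuclideanSpace ℝ (Fin 3))⟫_ℝ) := by fun_prop
  have h0 : ∫ Ω : Metric.sphere (0 : EuclideanSpace ℝ (Fin 3)) 1,
      (1 + s * ⟪ν, (Ω : EuclideanSpace ℝ (Fin 3))⟫_ℝ) ∂μ
      = (μ Set.univ).toReal + s * ⟪ν, ∫ Ω, (Ω : EuclideanSpace ℝ (Fin 3)) ∂μ⟫_ℝ := by
    rw [integral_add (integrable_const _) i2, integral_const_mul, integral_inner i1]
    simp [Measure.real]
  have h1 : ∫ Ω : Metric.sphere (0 : EuclideanSpace ℝ (Fin 3)) 1,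
      (1 + s * ⟪ν, (Ω : EuclideanSpace ℝ (Fin 3))⟫_ℝ) • (Ω : EuclideanSpace ℝ (Fin 3)) ∂μ
      = (∫ Ω, (Ω : EuclideanSpace ℝ (Fin 3)) ∂μ)
        + s • (∫ Ω, ⟪(Ω : EuclideanSpace ℝ (Fin 3)), ν⟫_ℝ •
          (Ω : EuclideanSpace ℝ (Fin 3)) ∂μ) := by
    rw [← integral_smul, ← integral_add i1 (hint _ (by fun_prop))]
    refine integral_congr_ae (Filter.Eventually.of_forall fun Ω => ?_)
    simp only [add_smul, one_smul, smul_smul, real_inner_comm]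
  refine ⟨hpos, ?_, ?_, ?_, ?_⟩
  · rw [withDensity_apply _ MeasurableSet.univ, Measure.restrict_univ, ← h0,
      integral_eq_lintegral_of_nonneg_ae (Filter.Eventually.of_forall hpos)
        cd.aestronglyMeasurable]
  · rw [integral_withDensity_eq_integral_toReal_smul
      cd.measurable.ennreal_ofReal
      (Filter.Eventually.of_forall fun _ => ENNReal.ofReal_lt_top), ← h1]
    refine integral_congr_ae (Filter.Eventually.of_forall fun Ω => ?_)
    simp only [ENNReal.toReal_ofReal (hpos Ω)]
  · rw [← h0]
    exact integral_nonneg hpos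
  · rw [← h0, ← h1]
    refine (norm_integral_le_integral_norm _).trans (le_of_eq ?_)
    refine integral_congr_ae (Filter.Eventually.of_forall fun Ω => ?_)
    have hΩ : ‖(Ω : EuclideanSpace ℝ (Fin 3))‖ = 1 := norm_eq_of_mem_sphere Ω
    simp only [norm_smul, hΩ, mul_one, Real.norm_eq_abs, abs_of_nonneg (hpos Ω)]
end

section
/- For every f ∈ [0, 1], the Eddington factor satisfies 1/3 ≤ χ(f) ≤ 1 and f² ≤ χ(f). -/
/-- The Eddington factor of the M₁ model. -/
noncomputable def eddingtonChi (f : ℝ) : ℝ :=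
  (3 + 4 * f ^ 2) / (5 + 2 * Real.sqrt (4 - 3 * f ^ 2))

/-- For every `f ∈ [0, 1]`, the Eddington factor satisfies `1/3 ≤ χ(f) ≤ 1` and `f² ≤ χ(f)`. -/
theorem eddingtonChi_bounds (f : ℝ) (hf : f ∈ Set.Icc (0 : ℝ) 1) :
    1 / 3 ≤ eddingtonChi f ∧ eddingtonChi f ≤ 1 ∧ f ^ 2 ≤ eddingtonChi f := by
  obtain ⟨h0, h1⟩ := hf
  unfold eddingtonChi
  have hf2 : f ^ 2 ≤ 1 := by nlinarith
  have hf0 : 0 ≤ f ^ 2 := sq_nonneg f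
  have hs := Real.sq_sqrt (show (0 : ℝ) ≤ 4 - 3 * f ^ 2 by linarith)
  have hs0 := Real.sqrt_nonneg (4 - 3 * f ^ 2)
  generalize Real.sqrt (4 - 3 * f ^ 2) = s at hs hs0 ⊢
  have hs1 : 1 ≤ s := by nlinarith
  have hs2 : s ≤ 2 := by nlinarith
  have hp : 0 < 5 + 2 * s := by linarith
  have he : f ^ 2 = (4 - s ^ 2) / 3 := by linarith
  rw [div_le_div_iff₀ (by norm_num) hp, div_le_one hp, le_div_iff₀ hp, he]
  refine ⟨by nlinarith, by nlinarith, ?_⟩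
  nlinarith [mul_nonneg (sq_nonneg (s - 1)) (show 0 ≤ 2 * s + 5 by linarith)]
end

section
/- The Eddington factor χ is strictly increasing on [0, 1], with χ(0) = 1/3 and χ(1) = 1. -/
/-- The Eddington factor `χ` is strictly increasing on `[0, 1]`, with `χ(0) = 1/3` and
`χ(1) = 1`. -/
theorem eddingtonChi_strictMonoOn :
    StrictMonoOn eddingtonChi (Set.Icc (0 : ℝ) 1) ∧
      eddingtonChi 0 = 1 / 3 ∧ eddingtonChi 1 = 1 := by
  refine ⟨?_, ?_, ?_⟩
  · intro a ha b hb hab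
    have hsq : a ^ 2 < b ^ 2 := by nlinarith [ha.1]
    have hs : Real.sqrt (4 - 3 * b ^ 2) ≤ Real.sqrt (4 - 3 * a ^ 2) :=
      Real.sqrt_le_sqrt (by linarith)
    have h0 := Real.sqrt_nonneg (4 - 3 * b ^ 2)
    unfold eddingtonChi
    apply div_lt_div₀ <;> first | positivity | linarith
  · have h : Real.sqrt (4 - 3 * (0 : ℝ) ^ 2) = 2 := by
      rw [Real.sqrt_eq_iff_mul_self_eq] <;> norm_num
    unfold eddingtonChi
    rw [h]; norm_num
  · unfold eddingtonChi
    norm_num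
end

section
/- Let n ∈ ℝ² with 0 < ‖n‖ ≤ 1 and set D(n) = ((1 − χ(‖n‖))/2)·I₂ + ((3χ(‖n‖) − 1)/2)·(nnᵀ/‖n‖²). Then D(n) is positive semidefinite, i.e. vᵀ D(n) v ≥ 0 for all v ∈ ℝ². -/
open scoped Matrix

/-- The Eddington tensor `D(n) = ((1 − χ(‖n‖))/2)·I₂ + ((3χ(‖n‖) − 1)/2)·(nnᵀ/‖n‖²)`. -/
noncomputable def eddingtonD (n : EuclideanSpace ℝ (Fin 2)) : Matrix (Fin 2) (Fin 2) ℝ :=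
  ((1 - eddingtonChi ‖n‖) / 2) • (1 : Matrix (Fin 2) (Fin 2) ℝ) +
    ((3 * eddingtonChi ‖n‖ - 1) / 2) • Matrix.of fun i j => n i * n j / ‖n‖ ^ 2

/-- For `0 < ‖n‖ ≤ 1`, the Eddington tensor `D(n)` is positive semidefinite:
`vᵀ D(n) v ≥ 0` for all `v ∈ ℝ²`. -/
theorem eddingtonD_posSemidef (n : EuclideanSpace ℝ (Fin 2))
    (h0 : 0 < ‖n‖) (h1 : ‖n‖ ≤ 1) :
    ∀ v : Fin 2 → ℝ, 0 ≤ v ⬝ᵥ (eddingtonD n).mulVec v := by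
  intro v
  have hs1 : 1 ≤ Real.sqrt (4 - 3 * ‖n‖ ^ 2) := by
    apply Real.le_sqrt_of_sq_le
    nlinarith
  have hs2 : Real.sqrt (4 - 3 * ‖n‖ ^ 2) ≤ 2 := by
    apply Real.sqrt_le_iff.mpr
    constructor
    · norm_num
    · nlinarith
  have hc1 : eddingtonChi ‖n‖ ≤ 1 := by
    unfold eddingtonChi
    rw [div_le_one (by linarith)]
    nlinarith
  have hc2 : 1 / 3 ≤ eddingtonChi ‖n‖ := by
    unfold eddingtonChi
    rw [le_div_iff₀ (by linarith)]
    nlinarith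
  have key : v ⬝ᵥ (eddingtonD n).mulVec v =
      ((1 - eddingtonChi ‖n‖) / 2) * (v 0 ^ 2 + v 1 ^ 2) +
      ((3 * eddingtonChi ‖n‖ - 1) / 2) * ((n 0 * v 0 + n 1 * v 1) ^ 2 / ‖n‖ ^ 2) := by
    simp [eddingtonD, Matrix.mulVec, dotProduct, Fin.sum_univ_two]
    ring
  rw [key]
  have ha : 0 ≤ (1 - eddingtonChi ‖n‖) / 2 := by linarith
  have hb : 0 ≤ (3 * eddingtonChi ‖n‖ - 1) / 2 := by linarith
  positivity
end

section
/- Let (p, q) ∈ ℝ × ℝ² and (r, s) ∈ ℝ × ℝ² both be realizable, let σ_a ≥ 0, σ_s ≥ 0, and Δt ≥ 0 satisfy Δt(σ_a + σ_s) ≤ 1. Then the forward-Euler updated pair ((1 − Δt σ_a) p + Δt r, (1 − Δt(σ_a + σ_s)) q + Δt s) is realizable. -/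
/-- Forward-Euler update of realizable moments with absorption `σ_a`, scattering `σ_s` and a
realizable source `(r, s)` stays realizable under the time-step restriction
`Δt(σ_a + σ_s) ≤ 1`. -/
theorem forwardEuler_source_realizable (p r : ℝ) (q s : EuclideanSpace ℝ (Fin 2))
    (σa σs Δt : ℝ)
    (hpq : 0 ≤ p ∧ ‖q‖ ≤ p) (hrs : 0 ≤ r ∧ ‖s‖ ≤ r)
    (ha : 0 ≤ σa) (hσs : 0 ≤ σs) (ht : 0 ≤ Δt) (hcfl : Δt * (σa + σs) ≤ 1) :
    0 ≤ (1 - Δt * σa) * p + Δt * r ∧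
      ‖(1 - Δt * (σa + σs)) • q + Δt • s‖ ≤ (1 - Δt * σa) * p + Δt * r := by
  have key : ‖(1 - Δt * (σa + σs)) • q + Δt • s‖ ≤ (1 - Δt * σa) * p + Δt * r := by
    have hc : 0 ≤ 1 - Δt * (σa + σs) := by linarith
    have h1 := norm_add_le ((1 - Δt * (σa + σs)) • q) (Δt • s)
    rw [norm_smul, norm_smul, Real.norm_of_nonneg hc, Real.norm_of_nonneg ht] at h1
    have h2 := mul_le_mul_of_nonneg_left hpq.2 hc
    have h3 := mul_le_mul_of_nonneg_left hrs.2 ht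
    have h4 := mul_nonneg (mul_nonneg ht hσs) hpq.1
    linarith
  exact ⟨(norm_nonneg _).trans key, key⟩
end

section
/- Let L ∈ ℕ, let w̃_γ ≥ 0 for γ = 1,…,L, let (w¹, w², w³) = (5/18, 8/18, 5/18), ŵ¹ = 1/6, let n₁, n₂, n₃ ∈ ℝ³ be unit vectors, l₁, l₂, l₃ > 0, |K| > 0, and Δt > 0 satisfy the CFL condition (2/3)ŵ¹ − Δt l_i/(2|K|) ≥ 0 for i = 1, 2, 3. Let μ_γ (γ = 1,…,L), μ_{i,β} and ν_{i,β} (i = 1,2,3, β = 1,2,3) be finite nonnegative Borel measures on S². For a finite nonnegative measure μ write m(μ) = (μ(S²), ∫_{S²} Ω dμ) ∈ ℝ × ℝ³ and, for a unit vector n, m⁻_n(μ) = (∫_{S²}(1 − n·Ω) dμ, ∫_{S²}(1 − n·Ω) Ω dμ). Then the updated cell average Ū = Σ_{γ=1}^{L} w̃_γ m(μ_γ) + Σ_{i=1}^{3} Σ_{β=1}^{3} w^β [ ((2/3)ŵ¹ − Δt l_i/(2|K|)) m(μ_{i,β}) + (Δt l_i/(2|K|)) m⁻_{n_i}(ν_{i,β})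 ] is realizable: its first component is ≥ the Euclidean norm of its ℝ³ component. -/
open MeasureTheory
open scoped InnerProductSpace

/-- The moment pair `(μ(S²), ∫ Ω dμ)` of a measure on the unit sphere `S² ⊂ ℝ³`. -/
noncomputable def mom
    (μ : Measure (Metric.sphere (0 : EuclideanSpace ℝ (Fin 3)) 1)) :
    ℝ × EuclideanSpace ℝ (Fin 3) :=
  ((μ Set.univ).toReal, ∫ Ω, (Ω : EuclideanSpace ℝ (Fin 3)) ∂μ)

/-- The moment pair `(∫ (1 − n·Ω) dμ, ∫ (1 − n·Ω) Ω dμ)` of a measure on the unit sphere,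
weighted by the nonnegative density `Ω ↦ 1 − n·Ω` for a unit vector `n`. -/
noncomputable def momMinus (n : EuclideanSpace ℝ (Fin 3))
    (μ : Measure (Metric.sphere (0 : EuclideanSpace ℝ (Fin 3)) 1)) :
    ℝ × EuclideanSpace ℝ (Fin 3) :=
  (∫ Ω, (1 - ⟪n, (Ω : EuclideanSpace ℝ (Fin 3))⟫_ℝ) ∂μ,
   ∫ Ω, (1 - ⟪n, (Ω : EuclideanSpace ℝ (Fin 3))⟫_ℝ) • (Ω : EuclideanSpace ℝ (Fin 3)) ∂μ)

def Rlz (p : ℝ × EuclideanSpace ℝ (Fin 3)) : Prop := ‖p.2‖ ≤ p.1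

theorem Rlz.add {p q : ℝ × EuclideanSpace ℝ (Fin 3)} (hp : Rlz p) (hq : Rlz q) :
    Rlz (p + q) :=
  (norm_add_le _ _).trans (add_le_add hp hq)

theorem Rlz.smul {c : ℝ} (hc : 0 ≤ c) {p : ℝ × EuclideanSpace ℝ (Fin 3)} (hp : Rlz p) :
    Rlz (c • p) := by
  unfold Rlz at *
  rw [Prod.smul_snd, Prod.smul_fst, norm_smul, Real.norm_of_nonneg hc, smul_eq_mul]
  exact mul_le_mul_of_nonneg_left hp hc

theorem Rlz.sum {ι : Type*} (s : Finset ι) (f : ι → ℝ × EuclideanSpace ℝ (Fin 3))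
    (h : ∀ i ∈ s, Rlz (f i)) : Rlz (∑ i ∈ s, f i) :=
  Finset.sum_induction f Rlz (fun _ _ => Rlz.add) (by simp [Rlz]) h

theorem rlz_mom (μ : Measure (Metric.sphere (0 : EuclideanSpace ℝ (Fin 3)) 1)) :
    Rlz (mom μ) := by
  unfold Rlz mom
  refine (norm_integral_le_integral_norm _).trans (le_of_eq ?_)
  simp [Measure.real]

theorem rlz_momMinus (n : EuclideanSpace ℝ (Fin 3)) (hn : ‖n‖ = 1)
    (μ : Measure (Metric.sphere (0 : EuclideanSpace ℝ (Fin 3)) 1)) :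
    Rlz (momMinus n μ) := by
  unfold Rlz momMinus
  refine (norm_integral_le_integral_norm _).trans (le_of_eq ?_)
  refine integral_congr_ae (Filter.Eventually.of_forall fun Ω => ?_)
  have h1 : ‖(Ω : EuclideanSpace ℝ (Fin 3))‖ = 1 := by simp
  have h2 := real_inner_le_norm n (Ω : EuclideanSpace ℝ (Fin 3))
  rw [hn, h1] at h2
  simp only [norm_smul, h1, mul_one]
  exact Real.norm_of_nonneg (by linarith)

/-- Algebraic core of the realizability-preservation theorem for one forward-Euler step of
the DG scheme with global Lax–Friedrichs flux on a triangle `K`: under the CFL condition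
`(2/3)ŵ¹ − Δt lᵢ/(2|K|) ≥ 0` (with `ŵ¹ = 1/6`), the updated cell average
`Ū = Σ_γ w̃_γ m(μ_γ) + Σᵢ Σ_β w^β [((2/3)ŵ¹ − Δt lᵢ/(2|K|)) m(μ_{i,β})
      + (Δt lᵢ/(2|K|)) m⁻_{nᵢ}(ν_{i,β})]`
is realizable: its first component dominates the norm of its `ℝ³` component. -/
theorem dg_cell_average_realizable (L : ℕ) (wt : Fin L → ℝ) (hwt : ∀ γ, 0 ≤ wt γ)
    (w : Fin 3 → ℝ) (hw : w = ![5/18, 8/18, 5/18])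
    (n : Fin 3 → EuclideanSpace ℝ (Fin 3)) (hn : ∀ i, ‖n i‖ = 1)
    (l : Fin 3 → ℝ) (hl : ∀ i, 0 < l i)
    (K : ℝ) (hK : 0 < K) (Δt : ℝ) (hΔt : 0 < Δt)
    (hcfl : ∀ i, 0 ≤ (2/3 : ℝ) * (1/6) - Δt * l i / (2 * K))
    (μin : Fin L → Measure (Metric.sphere (0 : EuclideanSpace ℝ (Fin 3)) 1))
    [∀ γ, IsFiniteMeasure (μin γ)]
    (μ : Fin 3 → Fin 3 → Measure (Metric.sphere (0 : EuclideanSpace ℝ (Fin 3)) 1))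
    [∀ i β, IsFiniteMeasure (μ i β)]
    (ν : Fin 3 → Fin 3 → Measure (Metric.sphere (0 : EuclideanSpace ℝ (Fin 3)) 1))
    [∀ i β, IsFiniteMeasure (ν i β)] :
    ‖(∑ γ, wt γ • mom (μin γ) +
        ∑ i, ∑ β, w β •
          (((2/3 : ℝ) * (1/6) - Δt * l i / (2 * K)) • mom (μ i β) +
            (Δt * l i / (2 * K)) • momMinus (n i) (ν i β))).2‖ ≤
      (∑ γ, wt γ • mom (μin γ) +
        ∑ i, ∑ β, w β •
          (((2/3 : ℝ) * (1/6) - Δt * l i / (2 * K)) • mom (μ i β) +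
            (Δt * l i / (2 * K)) • momMinus (n i) (ν i β))).1 := by
  change Rlz _
  have hwn : ∀ β, 0 ≤ w β := by
    intro β
    subst hw
    fin_cases β <;> norm_num
  refine Rlz.add (Rlz.sum _ _ fun γ _ => (rlz_mom _).smul (hwt γ)) ?_
  refine Rlz.sum _ _ fun i _ => Rlz.sum _ _ fun β _ => Rlz.smul (hwn β) ?_
  have := hl i
  exact ((rlz_mom _).smul (hcfl i)).add ((rlz_momMinus _ (hn i) _).smul (by positivity))
end

section
/- Let μ be a finite nonnegative Borel measure on S², let σ_a ≥ 0, σ_s ≥ 0, Δt ≥ 0 with Δt(σ_a + σ_s) ≤ 1, and let λ be the uniform surface measure on S² with total mass 4π. Then ν = (1 − Δt(σ_a + σ_s))·μ + (Δt σ_s/(4π))·μ(S²)·λ is a finite nonnegative Borel measure whose zeroth moment is ν(S²) = (1 − Δt σ_a)·μ(S²) and whose first moment is ∫_{S²} Ω dν = (1 − Δt(σ_a + σ_s))·∫_{S²} Ω dμ; in particular the pair ((1 − Δt σ_a)·μ(S²), (1 − Δt(σ_a + σ_s))·∫_{S²} Ω dμ) is realizable. -/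
open MeasureTheory

/-- Forward-Euler collision step: if `λ` is the uniform surface measure on `S²` with total
mass `4π` and vanishing first moment, `σ_a, σ_s, Δt ≥ 0` with `Δt(σ_a + σ_s) ≤ 1`, then
`ν = (1 − Δt(σ_a + σ_s))·μ + (Δt σ_s/(4π))·μ(S²)·λ` is a finite nonnegative measure with
zeroth moment `(1 − Δt σ_a)·μ(S²)` and first moment `(1 − Δt(σ_a + σ_s))·∫ Ω dμ`;
in particular that moment pair is realizable. -/
theorem collision_step_realizable
    (μ lam : Measure (Metric.sphere (0 : EuclideanSpace ℝ (Fin 3)) 1))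
    [IsFiniteMeasure μ] [IsFiniteMeasure lam]
    (hlam_mass : lam Set.univ = ENNReal.ofReal (4 * Real.pi))
    (hlam_first : (∫ Ω, (Ω : EuclideanSpace ℝ (Fin 3)) ∂lam) = 0)
    (σa σs Δt : ℝ) (ha : 0 ≤ σa) (hs : 0 ≤ σs) (ht : 0 ≤ Δt)
    (hcfl : Δt * (σa + σs) ≤ 1)
    (ν : Measure (Metric.sphere (0 : EuclideanSpace ℝ (Fin 3)) 1))
    (hν : ν = ENNReal.ofReal (1 - Δt * (σa + σs)) • μ +
      (ENNReal.ofReal (Δt * σs / (4 * Real.pi)) * μ Set.univ) • lam) :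
    IsFiniteMeasure ν ∧
    (ν Set.univ).toReal = (1 - Δt * σa) * (μ Set.univ).toReal ∧
    (∫ Ω, (Ω : EuclideanSpace ℝ (Fin 3)) ∂ν) =
      (1 - Δt * (σa + σs)) • ∫ Ω, (Ω : EuclideanSpace ℝ (Fin 3)) ∂μ ∧
    0 ≤ (1 - Δt * σa) * (μ Set.univ).toReal ∧
    ‖(1 - Δt * (σa + σs)) • ∫ Ω, (Ω : EuclideanSpace ℝ (Fin 3)) ∂μ‖ ≤
      (1 - Δt * σa) * (μ Set.univ).toReal := by
  have hpi := Real.pi_pos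
  have h1 : 0 ≤ 1 - Δt * (σa + σs) := by linarith
  have h2 : 0 ≤ Δt * σs := mul_nonneg ht hs
  have hc2 : 0 ≤ Δt * σs / (4 * Real.pi) := by positivity
  have hm : 0 ≤ (μ Set.univ).toReal := ENNReal.toReal_nonneg
  have hμ : μ Set.univ ≠ ⊤ := measure_ne_top μ _
  have htop : ENNReal.ofReal (Δt * σs / (4 * Real.pi)) * μ Set.univ ≠ ⊤ :=
    ENNReal.mul_ne_top ENNReal.ofReal_ne_top hμ
  have hint : ∀ (κ : Measure (Metric.sphere (0 : EuclideanSpace ℝ (Fin 3)) 1))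
      [IsFiniteMeasure κ], Integrable (fun Ω : Metric.sphere (0 : EuclideanSpace ℝ (Fin 3)) 1 =>
        (Ω : EuclideanSpace ℝ (Fin 3))) κ := by
    intro κ _
    refine Integrable.of_bound (C := 1)
      continuous_subtype_val.aestronglyMeasurable ?_
    exact Filter.Eventually.of_forall fun Ω => by simp
  have hnorm : ‖∫ Ω, (Ω : EuclideanSpace ℝ (Fin 3)) ∂μ‖ ≤ (μ Set.univ).toReal := by
    have := norm_integral_le_of_norm_le_const (μ := μ) (C := 1)
      (f := fun Ω : Metric.sphere (0 : EuclideanSpace ℝ (Fin 3)) 1 =>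
        (Ω : EuclideanSpace ℝ (Fin 3)))
      (Filter.Eventually.of_forall fun Ω => by simp)
    simpa [Measure.real] using this
  have hle : 1 - Δt * (σa + σs) ≤ 1 - Δt * σa := by nlinarith
  refine ⟨?_, ?_, ?_, ?_, ?_⟩
  · constructor
    rw [hν]
    simp only [Measure.add_apply, Measure.smul_apply, smul_eq_mul]
    exact ENNReal.add_lt_top.2 ⟨ENNReal.mul_lt_top ENNReal.ofReal_lt_top (measure_lt_top μ _),
      ENNReal.mul_lt_top htop.lt_top (measure_lt_top lam _)⟩
  · rw [hν]
    simp only [Measure.add_apply, Measure.smul_apply, smul_eq_mul]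
    rw [ENNReal.toReal_add (ENNReal.mul_ne_top ENNReal.ofReal_ne_top hμ)
      (ENNReal.mul_ne_top htop (measure_ne_top lam _)), hlam_mass]
    simp only [ENNReal.toReal_mul]
    rw [ENNReal.toReal_ofReal h1, ENNReal.toReal_ofReal hc2,
      ENNReal.toReal_ofReal (by positivity)]
    field_simp
    ring
  · rw [hν, integral_add_measure ((hint μ).smul_measure ENNReal.ofReal_ne_top)
      ((hint lam).smul_measure htop), integral_smul_measure, integral_smul_measure,
      hlam_first, smul_zero, add_zero, ENNReal.toReal_ofReal h1]
  · exact mul_nonneg (h1.trans hle) hm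
  · rw [norm_smul, Real.norm_of_nonneg h1]
    exact mul_le_mul hle hnorm (norm_nonneg _) (h1.trans hle)
end
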